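/- arXiv:2310.07874 — 8 statements merged into one kernel-verified Lean document; each statement's English description precedes it below -/
import Mathlib

section
/- Let d, k be positive integers, p a real number with 1 ≤ p < ∞, and A a real d × k matrix with σ_min,p(A) = inf{‖Ax‖_p : x ∈ ℝ^k, ‖x‖_p = 1}. Let z ∈ ℝ^k, and let ε_mdl, ε_nq ≥ 0 and vectors e_mdl, e_nq ∈ ℝ^d satisfy ‖e_mdl‖_p ≤ ε_mdl and ‖e_nq‖_p ≤ ε_nq. Set t = Az + e_mdl and b = t + e_nq. Suppose γ ≥ 1 and z̃ ∈ ℝ^k satisfies the relative regression guarantee ‖Az̃ − b‖_p ≤ γ · ‖Az' − b‖_p for every z' ∈ ℝ^k. Then σ_min,p(A) · ‖z − z̃‖_p ≤ (γ + 1)(ε_nq + ε_mdl). -/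
open scoped BigOperators

/-- The ℓ_p norm on `Fin m → ℝ` for a real exponent `p`. -/
noncomputable def pnorm (p : ℝ) {m : ℕ} (x : Fin m → ℝ) : ℝ :=
  (∑ i, |x i| ^ p) ^ (1 / p)

lemma pnorm_nonneg' (p : ℝ) {m : ℕ} (x : Fin m → ℝ) : 0 ≤ pnorm p x := by
  unfold pnorm; positivity

lemma pnorm_add_le' (p : ℝ) (hp : 1 ≤ p) {m : ℕ} (x y : Fin m → ℝ) :
    pnorm p (x + y) ≤ pnorm p x + pnorm p y :=
  Real.Lp_add_le Finset.univ x y hp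

lemma pnorm_smul' (p : ℝ) (hp : 1 ≤ p) {m : ℕ} (c : ℝ) (x : Fin m → ℝ) :
    pnorm p (c • x) = |c| * pnorm p x := by
  have hp0 : p ≠ 0 := by linarith
  unfold pnorm
  simp only [Pi.smul_apply, smul_eq_mul, abs_mul]
  simp_rw [Real.mul_rpow (abs_nonneg _) (abs_nonneg _)]
  rw [← Finset.mul_sum, Real.mul_rpow (by positivity) (by positivity),
    ← Real.rpow_mul (abs_nonneg _), mul_one_div_cancel hp0, Real.rpow_one]

lemma pnorm_neg' (p : ℝ) {m : ℕ} (x : Fin m → ℝ) : pnorm p (-x) = pnorm p x := by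
  simp [pnorm]

/-- Deterministic core of Theorem 1: error propagation from an approximate
ℓ_p-regression solution to the latent vector. -/
theorem stmt0 (d k : ℕ) (hd : 0 < d) (hk : 0 < k) (p : ℝ) (hp : 1 ≤ p)
    (A : Matrix (Fin d) (Fin k) ℝ)
    (σ : ℝ)
    (hσ : σ = sInf {r : ℝ | ∃ x : Fin k → ℝ, pnorm p x = 1 ∧ r = pnorm p (A.mulVec x)})
    (z ztil : Fin k → ℝ) (εmdl εnq : ℝ) (hεmdl : 0 ≤ εmdl) (hεnq : 0 ≤ εnq)
    (emdl enq : Fin d → ℝ) (hem : pnorm p emdl ≤ εmdl) (hen : pnorm p enq ≤ εnq)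
    (t b : Fin d → ℝ) (ht : t = A.mulVec z + emdl) (hb : b = t + enq)
    (γ : ℝ) (hγ : 1 ≤ γ)
    (hreg : ∀ z' : Fin k → ℝ, pnorm p (A.mulVec ztil - b) ≤ γ * pnorm p (A.mulVec z' - b)) :
    σ * pnorm p (z - ztil) ≤ (γ + 1) * (εnq + εmdl) := by
  have key : σ * pnorm p (z - ztil) ≤ pnorm p (A.mulVec (z - ztil)) := by
    rcases (pnorm_nonneg' p (z - ztil)).eq_or_lt with h0 | h0
    · rw [← h0, mul_zero]
      exact pnorm_nonneg' p _
    · have hle : σ ≤ pnorm p (A.mulVec ((pnorm p (z - ztil))⁻¹ • (z - ztil))) := by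
        rw [hσ]
        apply csInf_le
        · refine ⟨0, ?_⟩
          rintro r ⟨x, -, rfl⟩
          exact pnorm_nonneg' p _
        · refine ⟨_, ?_, rfl⟩
          rw [pnorm_smul' p hp, abs_of_pos (inv_pos.mpr h0), inv_mul_cancel₀ h0.ne']
      rw [Matrix.mulVec_smul, pnorm_smul' p hp, abs_of_pos (inv_pos.mpr h0)] at hle
      calc _ ≤ _ := mul_le_mul_of_nonneg_right hle h0.le
        _ = _ := by field_simp
  have hz : pnorm p (A.mulVec z - b) ≤ εnq + εmdl := by
    have : A.mulVec z - b = -(emdl + enq) := by rw [hb, ht]; abel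
    rw [this, pnorm_neg']
    linarith [pnorm_add_le' p hp emdl enq]
  have htri : pnorm p (A.mulVec (z - ztil)) ≤
      pnorm p (A.mulVec z - b) + pnorm p (A.mulVec ztil - b) := by
    have : A.mulVec (z - ztil) = (A.mulVec z - b) + -(A.mulVec ztil - b) := by
      rw [Matrix.mulVec_sub]; abel
    rw [this, ← pnorm_neg' p (A.mulVec ztil - b)]
    exact pnorm_add_le' p hp _ _
  have h1 := hreg z
  have h2 := mul_le_mul_of_nonneg_left hz (by linarith : (0:ℝ) ≤ γ)
  linarith
end

section
/- Let k be a positive integer, 1 ≤ p < ∞ a real number, δ > 0, and ℓ ∈ [0, δ]^k. Define the rounding map r^{(ℓ,δ)} : ℝ^k → ℝ^k coordinatewise by r^{(ℓ,δ)}_i(x) = max(⌊(x_i − ℓ_i)/δ⌋·δ + ℓ_i, 0). Then for all x, y ∈ ℝ^k one has ‖r^{(ℓ,δ)}(x) − r^{(ℓ,δ)}(y)‖_p ≤ ‖x − y‖_p + δ·k^{1/p}. -/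
open scoped BigOperators

/-- The coordinatewise rounding map `r^{(ℓ,δ)}`. -/
noncomputable def rnd {k : ℕ} (δ : ℝ) (ℓ : Fin k → ℝ) (x : Fin k → ℝ) : Fin k → ℝ :=
  fun i => max ((⌊(x i - ℓ i) / δ⌋ : ℝ) * δ + ℓ i) 0

/-- Rounding increases pairwise ℓ_p distances by at most `δ k^{1/p}`. -/
theorem stmt4 (k : ℕ) (hk : 0 < k) (p : ℝ) (hp : 1 ≤ p) (δ : ℝ) (hδ : 0 < δ)
    (ℓ : Fin k → ℝ) (hℓ : ∀ i, ℓ i ∈ Set.Icc 0 δ) :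
    ∀ x y : Fin k → ℝ,
      pnorm p (rnd δ ℓ x - rnd δ ℓ y) ≤ pnorm p (x - y) + δ * (k : ℝ) ^ (1 / p) := by
  intro x y
  have hp0 : 0 < p := lt_of_lt_of_le one_pos hp
  have key : ∀ i, |(rnd δ ℓ x - rnd δ ℓ y) i| ≤ |(x - y) i| + δ := by
    intro i
    simp only [Pi.sub_apply, rnd]
    refine (abs_max_sub_max_le_abs _ _ _).trans ?_
    have h1 := Int.floor_le ((x i - ℓ i) / δ)
    have h2 := Int.lt_floor_add_one ((x i - ℓ i) / δ)
    have h3 := Int.floor_le ((y i - ℓ i) / δ)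
    have h4 := Int.lt_floor_add_one ((y i - ℓ i) / δ)
    rw [le_div_iff₀ hδ] at h1 h3
    rw [div_lt_iff₀ hδ] at h2 h4
    have h5 := le_abs_self (x i - y i)
    have h6 := neg_abs_le (x i - y i)
    rw [abs_le]
    constructor <;> linarith
  have hmink := Real.Lp_add_le_of_nonneg (s := Finset.univ) (f := fun i => |(x - y) i|)
    (g := fun _ : Fin k => δ) hp (fun i _ => abs_nonneg _) (fun i _ => hδ.le)
  have hconst : (∑ _i : Fin k, δ ^ p) ^ (1 / p) = δ * (k : ℝ) ^ (1 / p) := by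
    rw [Finset.sum_const, Finset.card_univ, Fintype.card_fin, nsmul_eq_mul,
      Real.mul_rpow (Nat.cast_nonneg k) (Real.rpow_nonneg hδ.le p), ← Real.rpow_mul hδ.le,
      mul_one_div_cancel hp0.ne', Real.rpow_one, mul_comm]
  rw [hconst] at hmink
  refine le_trans ?_ hmink
  unfold pnorm
  refine Real.rpow_le_rpow (Finset.sum_nonneg fun i _ => Real.rpow_nonneg (abs_nonneg _) p)
    (Finset.sum_le_sum fun i _ => ?_) (by positivity)
  exact Real.rpow_le_rpow (abs_nonneg _) (key i) hp0.le
end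

section
/- Let k be a positive integer, 1 ≤ p < ∞ a real number, δ > 0, and ℓ ∈ [0, δ]^k, and let r^{(ℓ,δ)} : ℝ^k → ℝ^k be the rounding map r^{(ℓ,δ)}_i(x) = max(⌊(x_i − ℓ_i)/δ⌋·δ + ℓ_i, 0). Let S ⊆ [0,1]^k be a nonempty set, let x ∈ [0,1]^k, and let w ∈ S be a minimizer of the ℓ_p distance from x to S, i.e., ‖x − w‖_p ≤ ‖x − z‖_p for all z ∈ S. Then ‖x − r^{(ℓ,δ)}(w)‖_p ≤ 2·k^{1/p}·δ + inf{‖x − y‖_p : y ∈ r^{(ℓ,δ)}(S)}, where r^{(ℓ,δ)}(S) denotes the image of S under r^{(ℓ,δ)}. -/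
open scoped BigOperators

lemma pnorm_tri {p : ℝ} (hp : 1 ≤ p) {m : ℕ} (a b c : Fin m → ℝ) :
    pnorm p (a - c) ≤ pnorm p (a - b) + pnorm p (b - c) := by
  have h := Real.Lp_add_le Finset.univ (a - b) (b - c) hp
  simpa [pnorm] using h

lemma pnorm_le_of_abs_le {p : ℝ} (hp : 1 ≤ p) {m : ℕ} {δ : ℝ} (hδ : 0 < δ) (a : Fin m → ℝ)
    (h : ∀ i, |a i| ≤ δ) : pnorm p a ≤ (m : ℝ) ^ (1 / p) * δ := by
  have hp0 : 0 < p := by linarith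
  have h1 : ∑ i, |a i| ^ p ≤ (m : ℝ) * δ ^ p := by
    calc ∑ i, |a i| ^ p ≤ ∑ _i : Fin m, δ ^ p :=
          Finset.sum_le_sum fun i _ => Real.rpow_le_rpow (abs_nonneg _) (h i) hp0.le
      _ = (m : ℝ) * δ ^ p := by simp
  calc pnorm p a ≤ ((m : ℝ) * δ ^ p) ^ (1 / p) :=
        Real.rpow_le_rpow (Finset.sum_nonneg fun i _ => Real.rpow_nonneg (abs_nonneg _) _) h1
          (by positivity)
    _ = (m : ℝ) ^ (1 / p) * δ := by
        rw [Real.mul_rpow (by positivity) (by positivity), ← Real.rpow_mul hδ.le,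
          mul_one_div_cancel hp0.ne', Real.rpow_one]

lemma abs_sub_rnd_le {k : ℕ} {δ : ℝ} (hδ : 0 < δ) (ℓ z : Fin k → ℝ) (i : Fin k)
    (hz : 0 ≤ z i) : |z i - rnd δ ℓ z i| ≤ δ := by
  have h1 := (le_div_iff₀ hδ).1 (Int.floor_le ((z i - ℓ i) / δ))
  have h2 := (div_lt_iff₀ hδ).1 (Int.lt_floor_add_one ((z i - ℓ i) / δ))
  unfold rnd
  rw [abs_le]
  constructor
  · have : max ((⌊(z i - ℓ i) / δ⌋ : ℝ) * δ + ℓ i) 0 ≤ z i := max_le (by linarith) hz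
    linarith
  · have := le_max_left ((⌊(z i - ℓ i) / δ⌋ : ℝ) * δ + ℓ i) 0
    linarith

/-- Proposition (roundedDownDIst): rounding the nearest point of `S` to `x` yields a
point within `2 k^{1/p} δ` of the ℓ_p distance from `x` to the rounded set. -/
theorem stmt6 (k : ℕ) (hk : 0 < k) (p : ℝ) (hp : 1 ≤ p) (δ : ℝ) (hδ : 0 < δ)
    (ℓ : Fin k → ℝ) (hℓ : ∀ i, ℓ i ∈ Set.Icc 0 δ)
    (S : Set (Fin k → ℝ)) (hS : S.Nonempty)
    (hScube : S ⊆ Set.univ.pi fun _ : Fin k => Set.Icc (0 : ℝ) 1)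
    (x : Fin k → ℝ) (hx : x ∈ Set.univ.pi fun _ : Fin k => Set.Icc (0 : ℝ) 1)
    (w : Fin k → ℝ) (hw : w ∈ S)
    (hmin : ∀ z ∈ S, pnorm p (x - w) ≤ pnorm p (x - z)) :
    pnorm p (x - rnd δ ℓ w) ≤
      2 * (k : ℝ) ^ (1 / p) * δ +
        sInf {r : ℝ | ∃ y ∈ rnd δ ℓ '' S, r = pnorm p (x - y)} := by
  have key : ∀ z ∈ S, pnorm p (z - rnd δ ℓ z) ≤ (k : ℝ) ^ (1 / p) * δ ∧
      pnorm p (rnd δ ℓ z - z) ≤ (k : ℝ) ^ (1 / p) * δ := by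
    intro z hz
    have h : ∀ i, |z i - rnd δ ℓ z i| ≤ δ := fun i =>
      abs_sub_rnd_le hδ ℓ z i (hScube hz i (Set.mem_univ i)).1
    refine ⟨pnorm_le_of_abs_le hp hδ _ h, pnorm_le_of_abs_le hp hδ _ fun i => ?_⟩
    rw [Pi.sub_apply, abs_sub_comm]
    exact h i
  have hinf : pnorm p (x - rnd δ ℓ w) - 2 * (k : ℝ) ^ (1 / p) * δ ≤
      sInf {r : ℝ | ∃ y ∈ rnd δ ℓ '' S, r = pnorm p (x - y)} := by
    apply le_csInf
    · exact ⟨_, _, ⟨w, hw, rfl⟩, rfl⟩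
    · rintro r ⟨y, ⟨z, hz, rfl⟩, rfl⟩
      have h1 := pnorm_tri hp x w (rnd δ ℓ w)
      have h2 := pnorm_tri hp x (rnd δ ℓ z) z
      have h3 := hmin z hz
      have h4 := (key w hw).1
      have h5 := (key z hz).2
      linarith
  linarith
end

section
/- Let k be a positive integer and 1 ≤ p < ∞ a real number, and equip ℝ^k with the ℓ_p norm. Let δ > 0, ℓ ∈ [0,δ]^k, and let r^{(ℓ,δ)} : ℝ^k → ℝ^k be the rounding map r^{(ℓ,δ)}_i(x) = max(⌊(x_i − ℓ_i)/δ⌋·δ + ℓ_i, 0). Let B and B' be Borel probability measures on ℝ^k supported in [0,1]^k with Lévy–Prokhorov distance π_p(B, B') ≤ ε. Then the pushforward measures satisfy π_p(r^{(ℓ,δ)}_*B, r^{(ℓ,δ)}_*B') ≤ ε + δ·k^{1/p}. -/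
open scoped BigOperators
open MeasureTheory

/-- The open ε-thickening of a set w.r.t. the ℓ_p distance. -/
def thick (p : ℝ) {k : ℕ} (ε : ℝ) (A : Set (Fin k → ℝ)) : Set (Fin k → ℝ) :=
  {x | ∃ y ∈ A, pnorm p (x - y) < ε}

/-- The Lévy–Prokhorov distance between Borel measures on `(ℝ^k, ‖·‖_p)`. -/
noncomputable def prokhorov (p : ℝ) {k : ℕ} (P Q : Measure (Fin k → ℝ)) : ℝ :=
  sInf {ε : ℝ | 0 < ε ∧ ∀ A : Set (Fin k → ℝ), MeasurableSet A →
    P A ≤ Q (thick p ε A) + ENNReal.ofReal ε ∧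
    Q A ≤ P (thick p ε A) + ENNReal.ofReal ε}

/-- The topological support of a Borel measure. -/
def msupp {k : ℕ} (P : Measure (Fin k → ℝ)) : Set (Fin k → ℝ) :=
  {x | ∀ U : Set (Fin k → ℝ), IsOpen U → x ∈ U → P U ≠ 0}

lemma rnd_abs (δ : ℝ) (hδ : 0 < δ) {k : ℕ} (ℓ x y : Fin k → ℝ) (i : Fin k) :
    |rnd δ ℓ x i - rnd δ ℓ y i| ≤ |x i - y i| + δ := by
  refine (abs_max_sub_max_le_abs _ _ _).trans ?_
  have aux : ∀ u : ℝ, (⌊(u - ℓ i) / δ⌋ : ℝ) * δ + ℓ i ≤ u ∧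
      u - δ ≤ (⌊(u - ℓ i) / δ⌋ : ℝ) * δ + ℓ i := by
    intro u
    have h1 := Int.floor_le ((u - ℓ i) / δ)
    have h2 := (Int.lt_floor_add_one ((u - ℓ i) / δ)).le
    rw [le_div_iff₀ hδ] at h1
    rw [div_le_iff₀ hδ] at h2
    constructor <;> linarith
  obtain ⟨h1, h2⟩ := aux (x i)
  obtain ⟨h3, h4⟩ := aux (y i)
  have h5 := le_abs_self (x i - y i)
  have h6 := neg_abs_le (x i - y i)
  rw [abs_le]
  constructor <;> linarith

lemma pnorm_rnd (p : ℝ) (hp : 1 ≤ p) (δ : ℝ) (hδ : 0 < δ) {k : ℕ} (ℓ x y : Fin k → ℝ) :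
    pnorm p (rnd δ ℓ x - rnd δ ℓ y) ≤ pnorm p (x - y) + δ * (k : ℝ) ^ (1 / p) := by
  have hp0 : 0 < p := by linarith
  have h := Real.Lp_add_le Finset.univ (fun i => |x i - y i|) (fun _ : Fin k => δ) hp
  have e : (∑ _i : Fin k, |δ| ^ p) ^ (1 / p) = δ * (k : ℝ) ^ (1 / p) := by
    rw [abs_of_pos hδ, Finset.sum_const, Finset.card_univ, Fintype.card_fin, nsmul_eq_mul,
      Real.mul_rpow (by positivity) (by positivity), ← Real.rpow_mul hδ.le,
      mul_one_div_cancel hp0.ne', Real.rpow_one, mul_comm]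
  rw [e] at h
  simp only [abs_abs] at h
  refine le_trans ?_ h
  unfold pnorm
  refine Real.rpow_le_rpow (Finset.sum_nonneg fun i _ => by positivity) ?_ (by positivity)
  refine Finset.sum_le_sum fun i _ => Real.rpow_le_rpow (abs_nonneg _) ?_ hp0.le
  exact (rnd_abs δ hδ ℓ x y i).trans (le_abs_self _)

lemma measurable_rnd (δ : ℝ) {k : ℕ} (ℓ : Fin k → ℝ) : Measurable (rnd δ ℓ) := by
  refine measurable_pi_lambda _ fun i => ?_
  have h : Measurable fun x : Fin k → ℝ => ⌊(x i - ℓ i) / δ⌋ :=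
    Int.measurable_floor.comp (((measurable_pi_apply i).sub_const _).div_const _)
  have h' : Measurable fun x : Fin k → ℝ => ((⌊(x i - ℓ i) / δ⌋ : ℤ) : ℝ) :=
    (measurable_from_top (f := fun n : ℤ => (n : ℝ))).comp h
  exact ((h'.mul_const _).add_const _).max measurable_const

lemma map_rnd_le (p : ℝ) (hp : 1 ≤ p) (δ : ℝ) (hδ : 0 < δ) {k : ℕ} (ℓ : Fin k → ℝ)
    (P Q : Measure (Fin k → ℝ)) (e : ℝ)
    (h : ∀ A : Set (Fin k → ℝ), MeasurableSet A → P A ≤ Q (thick p e A) + ENNReal.ofReal e)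
    (A : Set (Fin k → ℝ)) (hA : MeasurableSet A) :
    P.map (rnd δ ℓ) A ≤ Q.map (rnd δ ℓ) (thick p (e + δ * (k : ℝ) ^ (1 / p)) A)
      + ENNReal.ofReal (e + δ * (k : ℝ) ^ (1 / p)) := by
  have hm := measurable_rnd δ ℓ
  rw [Measure.map_apply hm hA]
  refine (h _ (hm hA)).trans (add_le_add ?_ (ENNReal.ofReal_le_ofReal ?_))
  · refine le_trans (measure_mono ?_) (Measure.le_map_apply hm.aemeasurable _)
    rintro x ⟨y, hy, hxy⟩
    refine ⟨rnd δ ℓ y, hy, (pnorm_rnd p hp δ hδ ℓ x y).trans_lt ?_⟩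
    linarith
  · have : 0 ≤ δ * (k : ℝ) ^ (1 / p) := by positivity
    linarith

/-- Proposition (roundedProkhoroveDistance): rounding increases the Prokhorov distance
by at most `δ k^{1/p}`. -/
theorem stmt9 (k : ℕ) (hk : 0 < k) (p : ℝ) (hp : 1 ≤ p) (δ : ℝ) (hδ : 0 < δ)
    (ℓ : Fin k → ℝ) (hℓ : ∀ i, ℓ i ∈ Set.Icc 0 δ)
    (B B' : Measure (Fin k → ℝ)) [IsProbabilityMeasure B] [IsProbabilityMeasure B']
    (hsB : msupp B ⊆ Set.univ.pi fun _ : Fin k => Set.Icc (0 : ℝ) 1)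
    (hsB' : msupp B' ⊆ Set.univ.pi fun _ : Fin k => Set.Icc (0 : ℝ) 1)
    (ε : ℝ) (hε : 0 ≤ ε) (hπ : prokhorov p B B' ≤ ε) :
    prokhorov p (B.map (rnd δ ℓ)) (B'.map (rnd δ ℓ)) ≤ ε + δ * (k : ℝ) ^ (1 / p) := by
  have hc : 0 ≤ δ * (k : ℝ) ^ (1 / p) := by positivity
  refine le_of_forall_pos_lt_add fun η hη => ?_
  have hlt : prokhorov p B B' < ε + η := by linarith
  unfold prokhorov at hlt
  obtain ⟨e, ⟨he0, he⟩, hlt'⟩ := exists_lt_of_csInf_lt (by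
    refine ⟨1, one_pos, fun A _ => ⟨?_, ?_⟩⟩ <;>
    · rw [ENNReal.ofReal_one]
      exact prob_le_one.trans le_add_self) hlt
  refine lt_of_le_of_lt (b := e + δ * (k : ℝ) ^ (1 / p)) ?_ (by linarith)
  refine csInf_le ⟨0, fun z hz => hz.1.le⟩ ⟨by linarith, fun A hA => ⟨?_, ?_⟩⟩
  · exact map_rnd_le p hp δ hδ ℓ B B' e (fun A hA => (he A hA).1) A hA
  · exact map_rnd_le p hp δ hδ ℓ B' B e (fun A hA => (he A hA).2) A hA
end

section
/- Let δ > 0 and, for ℓ ∈ [0,δ], let r^{(ℓ)} : ℝ → ℝ be defined by r^{(ℓ)}(x) = max(⌊(x − ℓ)/δ⌋·δ + ℓ, 0). Then for all x, y ∈ [0,1], the Lebesgue measure of the set {ℓ ∈ [0,δ] : r^{(ℓ)}(x) ≠ r^{(ℓ)}(y)} is at most |x − y|. Equivalently, if ℓ is drawn uniformly from [0,δ], the probability that x and y are rounded to different values is at most |x − y|/δ. -/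
open MeasureTheory

lemma stmt11_aux (δ : ℝ) (hδ : 0 < δ)
    (r : ℝ → ℝ → ℝ) (hr : ∀ ℓ x : ℝ, r ℓ x = max ((⌊(x - ℓ) / δ⌋ : ℝ) * δ + ℓ) 0)
    (x y : ℝ) (hxy : x ≤ y) :
    volume {ℓ ∈ Set.Icc 0 δ | r ℓ x ≠ r ℓ y} ≤ ENNReal.ofReal (y - x) := by
  by_cases hd : δ ≤ y - x
  · calc volume {ℓ ∈ Set.Icc 0 δ | r ℓ x ≠ r ℓ y} ≤ volume (Set.Icc 0 δ) :=
          measure_mono (fun _ h => h.1)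
      _ = ENNReal.ofReal (δ - 0) := Real.volume_Icc
      _ ≤ _ := ENNReal.ofReal_le_ofReal (by linarith)
  push Not at hd
  obtain ⟨m, hm⟩ : ∃ m : ℤ, m = ⌊x / δ⌋ := ⟨_, rfl⟩
  have h1 : (m : ℝ) * δ ≤ x := by
    rw [← le_div_iff₀ hδ, hm]; exact Int.floor_le _
  have h2 : x < ((m : ℝ) + 1) * δ := by
    rw [← div_lt_iff₀ hδ, hm]; exact Int.lt_floor_add_one _
  have hsub : {ℓ ∈ Set.Icc 0 δ | r ℓ x ≠ r ℓ y} ⊆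
      Set.Ioc (x - m * δ) (min (y - m * δ) δ) ∪ Set.Icc 0 (y - m * δ - δ) := by
    rintro ℓ ⟨⟨h0, hl⟩, hne⟩
    obtain ⟨k, hk⟩ : ∃ k : ℤ, k = ⌊(y - ℓ) / δ⌋ := ⟨_, rfl⟩
    have hky : (k : ℝ) * δ ≤ y - ℓ := by
      rw [← le_div_iff₀ hδ, hk]; exact Int.floor_le _
    have hkx : x - ℓ < (k : ℝ) * δ := by
      rw [← div_lt_iff₀ hδ, ← Int.floor_lt]
      refine lt_of_le_of_ne ?_ ?_
      · rw [hk]; apply Int.floor_le_floor; gcongr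
      · intro h; apply hne; rw [hr, hr, h, hk]
    have hk1 : m - 1 < k := by
      have : ((m : ℝ) - 1) * δ < k * δ := by nlinarith
      have := lt_of_mul_lt_mul_right this hδ.le
      exact_mod_cast this
    have hk2 : k < m + 2 := by
      have : (k : ℝ) * δ < (m + 2) * δ := by nlinarith
      have := lt_of_mul_lt_mul_right this hδ.le
      exact_mod_cast this
    have : k = m ∨ k = m + 1 := by omega
    rcases this with rfl | rfl
    · left; exact ⟨by linarith, le_min (by linarith) hl⟩
    · right; push_cast at hky; exact ⟨h0, by linarith⟩
  refine (measure_mono hsub).trans ((measure_union_le _ _).trans ?_)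
  rw [Real.volume_Ioc, Real.volume_Icc]
  rcases le_total (y - m * δ) δ with h | h
  · rw [min_eq_left h, ENNReal.ofReal_of_nonpos (p := y - m * δ - δ - 0) (by linarith), add_zero]
    exact ENNReal.ofReal_le_ofReal (by linarith)
  · rw [min_eq_right h, ← ENNReal.ofReal_add (by linarith) (by linarith)]
    exact ENNReal.ofReal_le_ofReal (by linarith)

/-- Per-coordinate separation bound for a uniformly random grid offset: the set of
offsets `ℓ ∈ [0,δ]` for which `x` and `y` round to different grid points has Lebesgue
measure at most `|x - y|`. -/
theorem stmt11 (δ : ℝ) (hδ : 0 < δ)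
    (r : ℝ → ℝ → ℝ) (hr : ∀ ℓ x : ℝ, r ℓ x = max ((⌊(x - ℓ) / δ⌋ : ℝ) * δ + ℓ) 0)
    (x y : ℝ) (hx : x ∈ Set.Icc (0 : ℝ) 1) (hy : y ∈ Set.Icc (0 : ℝ) 1) :
    volume {ℓ ∈ Set.Icc 0 δ | r ℓ x ≠ r ℓ y} ≤ ENNReal.ofReal |x - y| := by
  rcases le_total x y with h | h
  · rw [abs_sub_comm, abs_of_nonneg (sub_nonneg.2 h)]
    exact stmt11_aux δ hδ r hr x y h
  · rw [abs_of_nonneg (sub_nonneg.2 h)]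
    simp_rw [ne_comm (a := r _ x)]
    exact stmt11_aux δ hδ r hr y x h
end

section
/- Let k be a positive integer, 1 ≤ p < ∞ a real number, δ > 0, and ε ≥ 0. For ℓ ∈ [0,δ]^k let r^{(ℓ,δ)} : ℝ^k → ℝ^k be the rounding map r^{(ℓ,δ)}_i(x) = max(⌊(x_i − ℓ_i)/δ⌋·δ + ℓ_i, 0). Let γ be a Borel probability measure on [0,1]^k × [0,1]^k such that γ({(x,y) : ‖x − y‖_p > ε}) ≤ ε. Then, averaging over ℓ drawn uniformly from [0,δ]^k, (1/δ^k)·∫_{[0,δ]^k} γ({(x,y) : r^{(ℓ,δ)}(x) ≠ r^{(ℓ,δ)}(y)}) dℓ ≤ (1 + k^{1−1/p}/δ)·ε. -/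
open scoped BigOperators
open MeasureTheory

lemma floor_ne_cover {δ : ℝ} (hδ : 0 < δ) (a b : ℝ) (hab : a ≤ b) (t : ℝ)
    (h : ⌊(a - t) / δ⌋ ≠ ⌊(b - t) / δ⌋) :
    ∃ n : ℤ, a - n * δ < t ∧ t ≤ b - n * δ := by
  have hle : ⌊(a - t) / δ⌋ ≤ ⌊(b - t) / δ⌋ := by
    apply Int.floor_le_floor; gcongr
  have hlt := lt_of_le_of_ne hle h
  refine ⟨⌊(b - t) / δ⌋, ?_, ?_⟩
  · have := Int.floor_lt.mp hlt
    rw [div_lt_iff₀ hδ] at this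
    linarith
  · have := Int.floor_le ((b - t) / δ)
    rw [le_div_iff₀ hδ] at this
    linarith

lemma core_aux {δ : ℝ} (hδ : 0 < δ) (a b : ℝ) (hab : a ≤ b) :
    volume ({t : ℝ | ⌊(a - t) / δ⌋ ≠ ⌊(b - t) / δ⌋} ∩ Set.Icc 0 δ) ≤ ENNReal.ofReal (b - a) := by
  have h0 : volume ({t : ℝ | ⌊(a - t) / δ⌋ ≠ ⌊(b - t) / δ⌋} ∩ Set.Icc 0 δ)
      ≤ volume ({t : ℝ | ⌊(a - t) / δ⌋ ≠ ⌊(b - t) / δ⌋} ∩ Set.Ioc 0 δ) := by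
    apply measure_mono_ae
    have : (Set.Ioc 0 δ : Set ℝ) =ᵐ[volume] Set.Icc 0 δ := Ioc_ae_eq_Icc
    exact ((ae_eq_refl _).inter this).symm.le
  refine h0.trans ?_
  have hsub : ({t : ℝ | ⌊(a - t) / δ⌋ ≠ ⌊(b - t) / δ⌋} ∩ Set.Ioc 0 δ) ⊆
      ⋃ n : ℤ, (fun t => t + n * δ) ⁻¹' (Set.Ioc a b ∩ Set.Ioc (n • δ) ((n + 1) • δ)) := by
    rintro t ⟨h1, h2, h3⟩
    obtain ⟨n, hn1, hn2⟩ := floor_ne_cover hδ a b hab t h1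
    refine Set.mem_iUnion.mpr ⟨n, ?_⟩
    simp only [Set.mem_preimage, Set.mem_inter_iff, Set.mem_Ioc, zsmul_eq_mul]
    push_cast
    refine ⟨⟨?_, ?_⟩, ?_, ?_⟩ <;> linarith
  calc _ ≤ _ := measure_mono hsub
    _ ≤ ∑' n : ℤ, volume ((fun t => t + n * δ) ⁻¹' (Set.Ioc a b ∩ Set.Ioc (n • δ) ((n + 1) • δ))) :=
        measure_iUnion_le _
    _ = ∑' n : ℤ, volume (Set.Ioc a b ∩ Set.Ioc (n • δ) ((n + 1) • δ)) := by
        congr 1; ext n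
        exact measure_preimage_add_right _ _ _
    _ = volume (⋃ n : ℤ, Set.Ioc a b ∩ Set.Ioc (n • δ) ((n + 1) • δ)) := by
        rw [measure_iUnion]
        · intro m n hmn
          exact (Set.pairwise_disjoint_Ioc_zsmul δ hmn).mono Set.inter_subset_right Set.inter_subset_right
        · intro n; exact measurableSet_Ioc.inter measurableSet_Ioc
    _ ≤ volume (Set.Ioc a b) := measure_mono (Set.iUnion_subset fun n => Set.inter_subset_left)
    _ = _ := Real.volume_Ioc

lemma core {δ : ℝ} (hδ : 0 < δ) (a b : ℝ) :
    volume ({t : ℝ | ⌊(a - t) / δ⌋ ≠ ⌊(b - t) / δ⌋} ∩ Set.Icc 0 δ) ≤ ENNReal.ofReal |a - b| := by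
  rcases le_total a b with h | h
  · rw [abs_sub_comm, abs_of_nonneg (sub_nonneg.mpr h)]; exact core_aux hδ a b h
  · rw [abs_of_nonneg (sub_nonneg.mpr h)]
    simp_rw [ne_comm (a := ⌊(a - _) / δ⌋)]
    exact core_aux hδ b a h

lemma slab {k : ℕ} (δ : ℝ) (i : Fin k) (S : Set ℝ) :
    volume.restrict (Set.univ.pi fun _ : Fin k => Set.Icc (0 : ℝ) δ) {ℓ : Fin k → ℝ | ℓ i ∈ S}
      ≤ volume (S ∩ Set.Icc 0 δ) * ENNReal.ofReal δ ^ (k - 1) := by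
  rw [Measure.restrict_apply' (MeasurableSet.univ_pi fun _ => measurableSet_Icc)]
  calc _ ≤ volume (Set.univ.pi (Function.update (fun _ : Fin k => Set.Icc (0 : ℝ) δ) i
            (S ∩ Set.Icc 0 δ))) := by
        apply measure_mono
        rintro ℓ ⟨h1, h2⟩ j -
        rcases eq_or_ne j i with rfl | hj
        · simpa using ⟨h1, h2 j trivial⟩
        · simpa [hj] using h2 j trivial
    _ = _ := by
        rw [volume_pi_pi, ← Finset.mul_prod_erase _ _ (Finset.mem_univ i)]
        congr 1
        · simp
        · rw [Finset.prod_congr rfl (g := fun _ => ENNReal.ofReal δ)]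
          · simp
          · intro j hj
            simp [Finset.ne_of_mem_erase hj]

lemma l1_le {k : ℕ} (p : ℝ) (hp : 1 ≤ p) (x : Fin k → ℝ) :
    ∑ i, |x i| ≤ (k : ℝ) ^ (1 - 1 / p) * pnorm p x := by
  have h := Real.rpow_sum_le_const_mul_sum_rpow Finset.univ x hp
  have hp0 : 0 < p := by linarith
  have hs : 0 ≤ ∑ i, |x i| := Finset.sum_nonneg fun i _ => abs_nonneg _
  have h2 := Real.rpow_le_rpow (by positivity) h (by positivity : 0 ≤ 1 / p)
  rw [← Real.rpow_mul hs, mul_one_div_cancel hp0.ne', Real.rpow_one,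
    Real.mul_rpow (by positivity) (Finset.sum_nonneg fun i _ => by positivity),
    ← Real.rpow_mul (by positivity)] at h2
  have e : (p - 1) * (1 / p) = 1 - 1 / p := by field_simp
  rw [e] at h2
  simpa [pnorm] using h2

lemma fiber {k : ℕ} {δ : ℝ} (hδ : 0 < δ) (x y : Fin k → ℝ) :
    volume.restrict (Set.univ.pi fun _ : Fin k => Set.Icc (0 : ℝ) δ)
      {ℓ : Fin k → ℝ | ∃ i, ⌊(x i - ℓ i) / δ⌋ ≠ ⌊(y i - ℓ i) / δ⌋}
      ≤ ENNReal.ofReal ((∑ i, |x i - y i|) * δ ^ (k - 1)) := by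
  rw [Set.ofPred_exists]
  refine (measure_iUnion_le _).trans ?_
  rw [tsum_fintype, Finset.sum_mul, ENNReal.ofReal_sum_of_nonneg (fun i _ => by positivity)]
  refine Finset.sum_le_sum fun i _ => ?_
  rw [ENNReal.ofReal_mul (abs_nonneg _), ENNReal.ofReal_pow hδ.le]
  refine (slab δ i {t : ℝ | ⌊(x i - t) / δ⌋ ≠ ⌊(y i - t) / δ⌋}).trans ?_
  gcongr
  exact core hδ _ _

/-- Central estimate of Lemma (TVdistanceBound): given a coupling `γ` on
`[0,1]^k × [0,1]^k` witnessing Prokhorov closeness `ε`, a uniformly random grid offset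
`ℓ ∈ [0,δ]^k` makes the two coordinates round differently with probability at most
`(1 + k^{1-1/p}/δ) ε`. -/
theorem stmt12 (k : ℕ) (hk : 0 < k) (p : ℝ) (hp : 1 ≤ p) (δ ε : ℝ) (hδ : 0 < δ)
    (hε : 0 ≤ ε)
    (γ : Measure ((Fin k → ℝ) × (Fin k → ℝ))) [IsProbabilityMeasure γ]
    (hγcube : γ ((Set.univ.pi fun _ : Fin k => Set.Icc (0 : ℝ) 1) ×ˢ
      (Set.univ.pi fun _ : Fin k => Set.Icc (0 : ℝ) 1)) = 1)
    (hγ : γ {q | ε < pnorm p (q.1 - q.2)} ≤ ENNReal.ofReal ε) :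
    ENNReal.ofReal (1 / δ ^ k) *
        ∫⁻ ℓ in Set.univ.pi fun _ : Fin k => Set.Icc (0 : ℝ) δ,
          γ {q | rnd δ ℓ q.1 ≠ rnd δ ℓ q.2} ≤
      ENNReal.ofReal ((1 + (k : ℝ) ^ (1 - 1 / p) / δ) * ε) := by
  have hk' : δ ^ k = δ * δ ^ (k - 1) := by
    rw [← pow_succ']; congr 1; omega
  set C : Set (Fin k → ℝ) := Set.univ.pi fun _ : Fin k => Set.Icc (0 : ℝ) δ with hC
  set A : Set ((Fin k → ℝ) × (Fin k → ℝ)) := {q | ε < pnorm p (q.1 - q.2)} with hA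
  have hAm : MeasurableSet A := by
    apply measurableSet_lt measurable_const
    unfold pnorm
    simp only [Pi.sub_apply]
    fun_prop
  set K : ℝ := (k : ℝ) ^ (1 - 1 / p) with hK
  have hK0 : 0 ≤ K := by positivity
  set S : Set ((Fin k → ℝ) × ((Fin k → ℝ) × (Fin k → ℝ))) :=
    {z | ∃ i, ⌊(z.2.1 i - z.1 i) / δ⌋ ≠ ⌊(z.2.2 i - z.1 i) / δ⌋} with hS
  have hSm : MeasurableSet S := by
    rw [hS, Set.ofPred_exists]
    refine MeasurableSet.iUnion fun i => ?_
    refine (measurableSet_eq_fun ?_ ?_).compl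
    · apply Measurable.floor; fun_prop
    · apply Measurable.floor; fun_prop
  have hvolC : volume.restrict C Set.univ = ENNReal.ofReal (δ ^ k) := by
    rw [Measure.restrict_apply_univ, hC, volume_pi_pi]
    simp [ENNReal.ofReal_pow hδ.le]
  have key : ∫⁻ ℓ in C, γ {q | rnd δ ℓ q.1 ≠ rnd δ ℓ q.2} ≤
      ENNReal.ofReal (δ ^ k) * ENNReal.ofReal ε + ENNReal.ofReal (K * ε * δ ^ (k - 1)) := by
    have : IsFiniteMeasure (volume.restrict C) := ⟨by rw [hvolC]; exact ENNReal.ofReal_lt_top⟩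
    calc _ ≤ ∫⁻ ℓ in C, γ (Prod.mk ℓ ⁻¹' S) := by
          refine lintegral_mono fun ℓ => measure_mono fun q hq => ?_
          by_contra hcon
          apply hq
          simp only [hS, Set.mem_preimage, Set.mem_ofPred_eq, not_exists, not_not] at hcon
          funext i
          simp only [rnd, hcon i]
      _ = ((volume.restrict C).prod γ) S := (Measure.prod_apply hSm).symm
      _ = ∫⁻ q, volume.restrict C ((fun ℓ => (ℓ, q)) ⁻¹' S) ∂γ := Measure.prod_apply_symm hSm
      _ ≤ ∫⁻ q, (A.indicator (fun _ => ENNReal.ofReal (δ ^ k)) q +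
            ENNReal.ofReal (K * ε * δ ^ (k - 1))) ∂γ := by
          refine lintegral_mono fun q => ?_
          by_cases hq : q ∈ A
          · simp only [Set.indicator_of_mem hq]
            exact (measure_mono (Set.subset_univ _)).trans (hvolC.le.trans le_self_add)
          · simp only [Set.indicator_of_notMem hq, zero_add]
            refine (fiber hδ q.1 q.2).trans (ENNReal.ofReal_le_ofReal ?_)
            have h1 := l1_le p hp (q.1 - q.2)
            have h2 : pnorm p (q.1 - q.2) ≤ ε := not_lt.mp hq
            simp only [Pi.sub_apply] at h1
            gcongr
            exact h1.trans (by gcongr)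
      _ = ENNReal.ofReal (δ ^ k) * γ A + ENNReal.ofReal (K * ε * δ ^ (k - 1)) := by
          rw [lintegral_add_right _ measurable_const, lintegral_indicator_const hAm]
          simp
      _ ≤ _ := by gcongr
  refine (mul_le_mul_right key _).trans (le_of_eq ?_)
  rw [← ENNReal.ofReal_mul (by positivity), ← ENNReal.ofReal_add (by positivity) (by positivity),
    ← ENNReal.ofReal_mul (by positivity)]
  congr 1
  rw [hk']
  field_simp
end

section
/- Let k be a positive integer, 1 ≤ p < ∞ a real number, δ > 0, and ε ≥ 0, and for ℓ ∈ [0,δ]^k let r^{(ℓ,δ)} : ℝ^k → ℝ^k be the rounding map r^{(ℓ,δ)}_i(x) = max(⌊(x_i − ℓ_i)/δ⌋·δ + ℓ_i, 0). Let F and F̂ be Borel probability measures on ℝ^k (with ℝ^k carrying the ℓ_p norm) such that the Lévy–Prokhorov distance satisfies π_p(F, F̂) ≤ ε. Then the average, over ℓ drawn uniformly from [0,δ]^k, of the total variation distance between the rounded distributions satisfies (1/δ^k)·∫_{[0,δ]^k} ‖r^{(ℓ,δ)}_*F − r^{(ℓ,δ)}_*F̂‖_TV dℓ ≤ (1 +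 k^{1−1/p}/δ)·ε. -/
open scoped BigOperators
open MeasureTheory

/-- The total variation distance between measures, as the supremum over measurable sets
of the (symmetrized) difference of their measures. -/
noncomputable def tvDist {α : Type*} [MeasurableSpace α] (μ ν : Measure α) : ENNReal :=
  ⨆ (A : Set α) (_ : MeasurableSet A), (μ A - ν A) ⊔ (ν A - μ A)

section helpers

/-- grid cell index -/
noncomputable def zm {k : ℕ} (δ : ℝ) (q : (Fin k → ℝ) × (Fin k → ℝ)) : Fin k → ℤ :=
  fun i => ⌊(q.2 i - q.1 i) / δ⌋

lemma zm_meas {k : ℕ} (δ : ℝ) : Measurable (zm (k := k) δ) := by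
  unfold zm
  refine measurable_pi_lambda _ fun i => ?_
  refine Measurable.floor ?_
  fun_prop

lemma rnd_eq {k : ℕ} (δ : ℝ) (ℓ : Fin k → ℝ) : ∃ g : (Fin k → ℤ) → (Fin k → ℝ),
    Measurable g ∧ rnd δ ℓ = g ∘ (fun x => zm δ (ℓ, x)) := by
  refine ⟨fun z i => max ((z i : ℝ) * δ + ℓ i) 0, measurable_of_countable _, ?_⟩
  rfl

lemma hahn_count {α : Type*} [Countable α] [MeasurableSpace α] [MeasurableSingletonClass α]
    (μ ν : Measure α) (T : Set α) :
    μ T + ν {z | ν {z} < μ {z}} ≤ μ {z | ν {z} < μ {z}} + ν T := by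
  set W := {z | ν {z} < μ {z}} with hW
  have mW : MeasurableSet W := W.to_countable.measurableSet
  have mT : MeasurableSet T := T.to_countable.measurableSet
  have h1 : μ (T \ W) ≤ ν (T \ W) := by
    rw [← Measure.tsum_indicator_apply_singleton μ _ (mT.diff mW),
      ← Measure.tsum_indicator_apply_singleton ν _ (mT.diff mW)]
    refine ENNReal.tsum_le_tsum fun z => Set.indicator_le_indicator' ?_
    intro hz
    exact not_lt.1 hz.2
  have h2 : ν (W \ T) ≤ μ (W \ T) := by
    rw [← Measure.tsum_indicator_apply_singleton μ _ (mW.diff mT),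
      ← Measure.tsum_indicator_apply_singleton ν _ (mW.diff mT)]
    refine ENNReal.tsum_le_tsum fun z => Set.indicator_le_indicator' ?_
    intro hz
    exact hz.1.le
  rw [← measure_inter_add_sdiff T mW, ← measure_inter_add_sdiff (μ := ν) W mT,
    ← measure_inter_add_sdiff (μ := μ) W mT, ← measure_inter_add_sdiff (μ := ν) T mW,
    Set.inter_comm W T]
  calc _ ≤ μ (T ∩ W) + ν (T \ W) + (ν (T ∩ W) + μ (W \ T)) := by gcongr
    _ = _ := by ring

lemma tv_le {k : ℕ} (δ : ℝ) (ℓ : Fin k → ℝ) (μ ν : Measure (Fin k → ℝ))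
    [IsProbabilityMeasure μ] [IsProbabilityMeasure ν] (B : Set (Fin k → ℝ))
    (hB : B = {x | ν {y | zm δ (ℓ, y) = zm δ (ℓ, x)} < μ {y | zm δ (ℓ, y) = zm δ (ℓ, x)}}) :
    tvDist (μ.map (rnd δ ℓ)) (ν.map (rnd δ ℓ)) + ν B ≤ μ B := by
  obtain ⟨g, hg, hr⟩ := rnd_eq δ ℓ
  have hz : Measurable (fun x => zm δ (ℓ, x)) := (zm_meas δ).comp measurable_prodMk_left
  have hrm : Measurable (rnd δ ℓ) := hr ▸ hg.comp hz
  have key : ∀ T : Set (Fin k → ℤ), μ ((fun x => zm δ (ℓ, x)) ⁻¹' T) + ν B ≤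
      μ B + ν ((fun x => zm δ (ℓ, x)) ⁻¹' T) := by
    intro T
    have := hahn_count (μ.map (fun x => zm δ (ℓ, x))) (ν.map (fun x => zm δ (ℓ, x))) T
    have ms : ∀ S : Set (Fin k → ℤ), MeasurableSet S := fun S => S.to_countable.measurableSet
    simp only [Measure.map_apply hz (ms _)] at this
    rw [hB]
    exact this
  have key2 : ∀ A, MeasurableSet A → μ (rnd δ ℓ ⁻¹' A) - ν (rnd δ ℓ ⁻¹' A) ≤ μ B - ν B := by
    intro A hA
    have := key (g ⁻¹' A)
    rw [← Set.preimage_comp, ← hr] at this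
    rw [tsub_le_iff_right]
    refine (ENNReal.le_sub_of_add_le_right (measure_ne_top _ _) this).trans ?_
    rw [tsub_le_iff_right]
    calc _ ≤ μ B - ν B + ν B + ν (rnd δ ℓ ⁻¹' A) := by gcongr; exact le_tsub_add
      _ = _ := by ring
  have hle : ν B ≤ μ B := by
    have := key ∅
    simpa using this
  have h3 : tvDist (μ.map (rnd δ ℓ)) (ν.map (rnd δ ℓ)) ≤ μ B - ν B := by
    unfold tvDist
    refine iSup₂_le fun A hA => ?_
    rw [Measure.map_apply hrm hA, Measure.map_apply hrm hA]
    refine sup_le (key2 A hA) ?_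
    refine le_trans (le_of_eq ?_) (key2 Aᶜ hA.compl)
    rw [Set.preimage_compl, prob_compl_eq_one_sub (hrm hA), prob_compl_eq_one_sub (hrm hA)]
    rw [ENNReal.sub_sub_sub_cancel_left] <;> simp [prob_le_one]
  calc _ ≤ μ B - ν B + ν B := by gcongr
    _ = _ := tsub_add_cancel_of_le hle

lemma one_dim (δ a b : ℝ) (hδ : 0 < δ) :
    volume ({s : ℝ | ⌊(a - s) / δ⌋ ≠ ⌊(b - s) / δ⌋} ∩ Set.Icc 0 δ) ≤
      ENNReal.ofReal |a - b| := by
  wlog hab : a ≤ b generalizing a b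
  · have := this b a (le_of_not_ge hab)
    rw [abs_sub_comm]
    simpa only [ne_comm] using this
  have hsub : ({s : ℝ | ⌊(a - s) / δ⌋ ≠ ⌊(b - s) / δ⌋} ∩ Set.Icc 0 δ) ⊆
      {δ} ∪ ⋃ n : ℤ, (fun s => s + n * δ) ⁻¹' (Set.Ioc a b ∩ Set.Ico (n * δ) ((n + 1) * δ)) := by
    rintro s ⟨hs, h0, h1⟩
    rcases h1.eq_or_lt with h1 | h1
    · left; exact h1
    right
    have hle : (a - s) / δ ≤ (b - s) / δ := by gcongr
    have hlt : ⌊(a - s) / δ⌋ < ⌊(b - s) / δ⌋ := lt_of_le_of_ne (Int.floor_mono hle) hs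
    refine Set.mem_iUnion.2 ⟨⌊(b - s) / δ⌋, ⟨?_, ?_⟩, ?_, ?_⟩
    · have := Int.floor_lt.1 hlt
      rw [div_lt_iff₀ hδ] at this
      show a < s + _
      linarith
    · have := Int.floor_le ((b - s) / δ)
      rw [le_div_iff₀ hδ] at this
      show s + _ ≤ b
      linarith
    · show _ ≤ s + _
      linarith
    · show s + _ < _
      linarith
  have hcov : (⋃ n : ℤ, (Set.Ioc a b ∩ Set.Ico (n * δ) ((n + 1) * δ))) ⊆ Set.Ioc a b :=
    Set.iUnion_subset fun n => Set.inter_subset_left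
  calc _ ≤ volume ({δ} : Set ℝ) + ∑' n : ℤ, volume ((fun s : ℝ => s + n * δ) ⁻¹'
        (Set.Ioc a b ∩ Set.Ico (n * δ) ((n + 1) * δ))) :=
        (measure_mono hsub).trans ((measure_union_le _ _).trans
          (by gcongr; exact measure_iUnion_le _))
    _ = ∑' n : ℤ, volume (Set.Ioc a b ∩ Set.Ico (n * δ) ((n + 1) * δ)) := by
        simp only [measure_preimage_add_right, Real.volume_singleton, zero_add]
    _ = volume (⋃ n : ℤ, (Set.Ioc a b ∩ Set.Ico (n * δ) ((n + 1) * δ))) := by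
        rw [measure_iUnion]
        · intro m n hmn
          refine Set.disjoint_left.2 fun t ht ht' => hmn ?_
          have hf : ∀ n : ℤ, t ∈ Set.Ico (n * δ) ((n + 1) * δ) → ⌊t / δ⌋ = n := by
            intro n hn
            rw [Int.floor_eq_iff, le_div_iff₀ hδ, div_lt_iff₀ hδ]
            exact hn
          rw [← hf m ht.2, ← hf n ht'.2]
        · intro n
          exact measurableSet_Ioc.inter measurableSet_Ico
    _ ≤ volume (Set.Ioc a b) := measure_mono hcov
    _ = _ := by rw [Real.volume_Ioc, abs_sub_comm, abs_of_nonneg (by linarith)]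

lemma box_diff {k : ℕ} (δ : ℝ) (hδ : 0 < δ) (x y : Fin k → ℝ) :
    volume.restrict (Set.univ.pi fun _ : Fin k => Set.Icc (0 : ℝ) δ)
      {ℓ | zm δ (ℓ, x) ≠ zm δ (ℓ, y)} ≤ ENNReal.ofReal (δ ^ k * ((∑ i, |x i - y i|) / δ)) := by
  classical
  have mQ : MeasurableSet (Set.univ.pi fun _ : Fin k => Set.Icc (0 : ℝ) δ) :=
    MeasurableSet.univ_pi fun _ => measurableSet_Icc
  rw [Measure.restrict_apply' mQ]
  have hsub : {ℓ | zm δ (ℓ, x) ≠ zm δ (ℓ, y)} ∩ (Set.univ.pi fun _ : Fin k => Set.Icc (0 : ℝ) δ)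
      ⊆ ⋃ i : Fin k, Set.univ.pi (Function.update (fun _ : Fin k => Set.Icc (0 : ℝ) δ) i
        ({s : ℝ | ⌊(x i - s) / δ⌋ ≠ ⌊(y i - s) / δ⌋} ∩ Set.Icc 0 δ)) := by
    rintro ℓ ⟨h, hQ⟩
    obtain ⟨i, hi⟩ := Function.ne_iff.1 h
    refine Set.mem_iUnion.2 ⟨i, fun j _ => ?_⟩
    by_cases hj : j = i
    · subst hj
      rw [Function.update_self]
      exact ⟨hi, hQ j trivial⟩
    · rw [Function.update_of_ne hj]
      exact hQ j trivial
  refine (measure_mono hsub).trans ((measure_iUnion_le _).trans ?_)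
  rw [tsum_fintype, Finset.sum_div, Finset.mul_sum, ENNReal.ofReal_sum_of_nonneg
    (fun i _ => by positivity)]
  refine Finset.sum_le_sum fun i _ => ?_
  rw [volume_pi_pi]
  have : ∀ j, volume (Function.update (fun _ : Fin k => Set.Icc (0 : ℝ) δ) i
        ({s : ℝ | ⌊(x i - s) / δ⌋ ≠ ⌊(y i - s) / δ⌋} ∩ Set.Icc 0 δ) j) ≤
        Function.update (fun _ : Fin k => ENNReal.ofReal δ) i (ENNReal.ofReal |x i - y i|) j := by
    intro j
    by_cases hj : j = i
    · subst hj
      rw [Function.update_self, Function.update_self]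
      exact one_dim _ _ _ hδ
    · rw [Function.update_of_ne hj, Function.update_of_ne hj]
      simp
  refine (Finset.prod_le_prod' fun j _ => this j).trans (le_of_eq ?_)
  rw [Finset.prod_update_of_mem (Finset.mem_univ i), Finset.prod_const, ← ENNReal.ofReal_pow hδ.le,
    ← ENNReal.ofReal_mul (abs_nonneg _), Finset.card_sdiff_of_subset (by simp)]
  congr 1
  have hk : 0 < k := i.pos
  obtain ⟨m, rfl⟩ : ∃ m, k = m + 1 := ⟨k - 1, by omega⟩
  simp
  field_simp
  ring

lemma layer {α : Type*} [MeasurableSpace α] (μ ν : Measure α) [IsProbabilityMeasure ν]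
    (h : α → ℝ) (hm : Measurable h)
    (h0 : ∀ x, 0 ≤ h x) (h1 : ∀ x, h x ≤ 1) (c e : ℝ) (hc : 0 ≤ c) (he : 0 ≤ e)
    (H : ∀ t, μ {x | t ≤ h x} ≤ ν {x | t ≤ h x + c} + ENNReal.ofReal e) :
    ∫⁻ x, ENNReal.ofReal (h x) ∂μ ≤
      ∫⁻ x, ENNReal.ofReal (h x) ∂ν + ENNReal.ofReal (c + e) := by
  rw [lintegral_eq_lintegral_meas_le μ (Filter.Eventually.of_forall h0) hm.aemeasurable]
  have hcut : ∀ t ∈ Set.Ioi (0 : ℝ), μ {x | t ≤ h x} ≤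
      ν {x | t ≤ h x + c} + (Set.Ioc (0:ℝ) 1).indicator (fun _ => ENNReal.ofReal e) t := by
    intro t ht
    by_cases ht1 : t ≤ 1
    · rw [Set.indicator_of_mem (show t ∈ Set.Ioc (0:ℝ) 1 from ⟨ht, ht1⟩)]
      exact H t
    · have : {x | t ≤ h x} = ∅ := by
        ext x
        simp only [Set.mem_ofPred_eq, Set.mem_empty_iff_false, iff_false]
        have := h1 x
        linarith
      rw [this]; simp
  refine (setLIntegral_mono' measurableSet_Ioi hcut).trans ?_
  rw [lintegral_add_right _ (measurable_const.indicator measurableSet_Ioc),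
    ← lintegral_eq_lintegral_meas_le ν (Filter.Eventually.of_forall fun x => add_nonneg (h0 x) hc)
      (hm.add_const c).aemeasurable]
  rw [lintegral_indicator measurableSet_Ioc, ENNReal.ofReal_add hc he, ← add_assoc]
  refine add_le_add (le_of_eq ?_) ?_
  · simp_rw [fun x => ENNReal.ofReal_add (h0 x) hc]
    rw [lintegral_add_right _ measurable_const]
    simp
  · rw [setLIntegral_const, Measure.restrict_apply measurableSet_Ioc]
    calc _ ≤ ENNReal.ofReal e * volume (Set.Ioc (0:ℝ) 1) := by
            gcongr; exact Set.inter_subset_left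
      _ = _ := by simp

lemma hcell_aux {k : ℕ} (δ : ℝ) (μ : Measure (Fin k → ℝ)) [IsProbabilityMeasure μ]
    (z : Fin k → ℤ) : Measurable (fun ℓ : Fin k → ℝ => μ {y | zm δ (ℓ, y) = z}) := by
  have hz : MeasurableSet ({z} : Set (Fin k → ℤ)) := measurableSet_singleton z
  have h := measurable_measure_prodMk_left (ν := μ) (zm_meas δ hz)
  exact h

/-- measure of the cell with index `r.2` for offset `r.1` -/
noncomputable def cellM {k : ℕ} (δ : ℝ) (μ : Measure (Fin k → ℝ))
    (r : (Fin k → ℝ) × (Fin k → ℤ)) : ENNReal := μ {y | zm δ (r.1, y) = r.2}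

lemma cellM_meas {k : ℕ} (δ : ℝ) (μ : Measure (Fin k → ℝ)) [IsProbabilityMeasure μ] :
    Measurable (cellM δ μ) := by
  refine measurable_from_prod_countable_left ?_
  intro z
  exact hcell_aux δ μ z

lemma hcell {k : ℕ} (δ : ℝ) (μ : Measure (Fin k → ℝ)) [IsProbabilityMeasure μ] : Measurable
      (fun q : (Fin k → ℝ) × (Fin k → ℝ) => μ {y | zm δ (q.1, y) = zm δ q}) := by
  have h1 : Measurable (fun q : (Fin k → ℝ) × (Fin k → ℝ) => (q.1, zm δ q)) :=
    Measurable.prodMk measurable_fst (zm_meas δ)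
  have h2 := (cellM_meas δ μ).comp h1
  exact h2

lemma main_bound (k : ℕ) (p : ℝ) (hp : 1 ≤ p) (δ ε : ℝ) (hδ : 0 < δ)
    (hε : 0 < ε)
    (F F' : Measure (Fin k → ℝ)) [IsProbabilityMeasure F] [IsProbabilityMeasure F']
    (hF : ∀ A : Set (Fin k → ℝ), MeasurableSet A →
      F A ≤ F' (thick p ε A) + ENNReal.ofReal ε) :
    ENNReal.ofReal (1 / δ ^ k) *
        ∫⁻ ℓ in Set.univ.pi fun _ : Fin k => Set.Icc (0 : ℝ) δ,
          tvDist (F.map (rnd δ ℓ)) (F'.map (rnd δ ℓ)) ≤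
      ENNReal.ofReal ((1 + (k : ℝ) ^ (1 - 1 / p) / δ) * ε) := by
  set U : Measure (Fin k → ℝ) :=
    volume.restrict (Set.univ.pi fun _ : Fin k => Set.Icc (0 : ℝ) δ) with hU
  have hUuniv : U Set.univ = ENNReal.ofReal (δ ^ k) := by
    rw [hU, Measure.restrict_apply_univ, volume_pi_pi]
    simp [ENNReal.ofReal_pow hδ.le]
  have : IsFiniteMeasure U := ⟨by rw [hUuniv]; exact ENNReal.ofReal_lt_top⟩
  set S : Set ((Fin k → ℝ) × (Fin k → ℝ)) :=
    {q | F' {y | zm δ (q.1, y) = zm δ q} < F {y | zm δ (q.1, y) = zm δ q}} with hS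
  have mS : MeasurableSet S := measurableSet_lt (hcell δ F') (hcell δ F)
  have htv : ∀ ℓ, tvDist (F.map (rnd δ ℓ)) (F'.map (rnd δ ℓ)) + F' (Prod.mk ℓ ⁻¹' S) ≤
      F (Prod.mk ℓ ⁻¹' S) := fun ℓ => tv_le δ ℓ F F' _ rfl
  set h : (Fin k → ℝ) → ℝ := fun x => (U ((fun ℓ => (ℓ, x)) ⁻¹' S)).toReal / δ ^ k with hh
  have hδk : 0 < δ ^ k := by positivity
  have hm : Measurable h := (measurable_measure_prodMk_right mS).ennreal_toReal.div_const _
  have h0 : ∀ x, 0 ≤ h x := fun x => by positivity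
  have h1 : ∀ x, h x ≤ 1 := by
    intro x
    rw [hh]
    simp only
    rw [div_le_one hδk]
    refine ENNReal.toReal_le_of_le_ofReal hδk.le ?_
    rw [← hUuniv]
    exact measure_mono (Set.subset_univ _)
  set L : ℝ := (k : ℝ) ^ (1 - 1 / p) / δ with hL
  have hL0 : 0 ≤ L := by positivity
  have hlip : ∀ x y, h y ≤ h x + L * pnorm p (x - y) := by
    intro x y
    have hle : U ((fun ℓ => (ℓ, y)) ⁻¹' S) ≤ U ((fun ℓ => (ℓ, x)) ⁻¹' S) +
        ENNReal.ofReal (δ ^ k * ((∑ i, |x i - y i|) / δ)) := by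
      refine le_trans ?_ (add_le_add le_rfl (box_diff δ hδ x y))
      refine le_trans (measure_mono ?_) (measure_union_le _ _)
      intro ℓ hℓ
      by_cases he : zm δ (ℓ, x) = zm δ (ℓ, y)
      · left
        simp only [hS, Set.mem_preimage, Set.mem_ofPred_eq] at hℓ ⊢
        rw [he]; exact hℓ
      · right; exact he
    have hle2 := ENNReal.toReal_mono (by finiteness) hle
    rw [ENNReal.toReal_add (by finiteness) (by finiteness),
      ENNReal.toReal_ofReal (by positivity)] at hle2
    have hl1 := l1_le p hp (x - y)
    have : h y ≤ h x + (∑ i, |x i - y i|) / δ := by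
      simp only [hh]
      rw [div_le_iff₀ hδk, add_mul, div_mul_cancel₀ _ hδk.ne']
      linarith
    refine this.trans ?_
    gcongr
    rw [hL, div_mul_eq_mul_div]
    gcongr
    exact hl1
  have hlay := layer F F' h hm h0 h1 (L * ε) ε (by positivity) hε.le (by
    intro t
    refine (hF _ (hm measurableSet_Ici)).trans ?_
    gcongr
    rintro x ⟨y, hy, hxy⟩
    have hy' : t ≤ h y := hy
    have := hlip x y
    have h3 : L * pnorm p (x - y) ≤ L * ε := by gcongr
    show t ≤ h x + L * ε
    linarith)
  have hh2 : ∀ x, ENNReal.ofReal (h x) =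
      ENNReal.ofReal (1 / δ ^ k) * U ((fun ℓ => (ℓ, x)) ⁻¹' S) := by
    intro x
    simp only [hh]
    rw [div_eq_mul_one_div, mul_comm, ENNReal.ofReal_mul (by positivity),
      ENNReal.ofReal_toReal (by finiteness)]
  have hint : ∀ μ : Measure (Fin k → ℝ), IsProbabilityMeasure μ →
      ∫⁻ x, ENNReal.ofReal (h x) ∂μ =
        ENNReal.ofReal (1 / δ ^ k) * ∫⁻ ℓ, μ (Prod.mk ℓ ⁻¹' S) ∂U := by
    intro μ _
    simp_rw [hh2]
    rw [lintegral_const_mul _ (measurable_measure_prodMk_right mS), ← Measure.prod_apply mS,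
      ← Measure.prod_apply_symm mS]
  have hsum : ENNReal.ofReal (1 / δ ^ k) *
        ∫⁻ ℓ, tvDist (F.map (rnd δ ℓ)) (F'.map (rnd δ ℓ)) ∂U +
        ∫⁻ x, ENNReal.ofReal (h x) ∂F' ≤ ∫⁻ x, ENNReal.ofReal (h x) ∂F := by
    rw [hint F inferInstance, hint F' inferInstance, ← mul_add,
      ← lintegral_add_right _ (measurable_measure_prodMk_left mS)]
    gcongr with ℓ
    exact htv ℓ
  have hfin : ∫⁻ x, ENNReal.ofReal (h x) ∂F' ≠ ⊤ := by
    refine ne_top_of_le_ne_top ENNReal.one_ne_top ?_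
    calc _ ≤ ∫⁻ x, 1 ∂F' := lintegral_mono fun x => by simpa using h1 x
      _ = 1 := by simp
  have := hsum.trans hlay
  rw [add_comm] at this
  have := (ENNReal.add_le_add_iff_left hfin).1 this
  refine this.trans (le_of_eq ?_)
  congr 1
  ring

end helpers

/-- Lemma (TVdistanceBound): if `π_p(F, F̂) ≤ ε`, then the average over a uniformly
random offset `ℓ ∈ [0,δ]^k` of the total variation distance between the rounded
distributions is at most `(1 + k^{1-1/p}/δ) ε`. -/
theorem stmt13 (k : ℕ) (hk : 0 < k) (p : ℝ) (hp : 1 ≤ p) (δ ε : ℝ) (hδ : 0 < δ)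
    (hε : 0 ≤ ε)
    (F F' : Measure (Fin k → ℝ)) [IsProbabilityMeasure F] [IsProbabilityMeasure F']
    (hπ : prokhorov p F F' ≤ ε) :
    ENNReal.ofReal (1 / δ ^ k) *
        ∫⁻ ℓ in Set.univ.pi fun _ : Fin k => Set.Icc (0 : ℝ) δ,
          tvDist (F.map (rnd δ ℓ)) (F'.map (rnd δ ℓ)) ≤
      ENNReal.ofReal ((1 + (k : ℝ) ^ (1 - 1 / p) / δ) * ε) := by
  classical
  set X := ENNReal.ofReal (1 / δ ^ k) *
        ∫⁻ ℓ in Set.univ.pi fun _ : Fin k => Set.Icc (0 : ℝ) δ,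
          tvDist (F.map (rnd δ ℓ)) (F'.map (rnd δ ℓ)) with hX
  have hc : 0 < 1 + (k : ℝ) ^ (1 - 1 / p) / δ := by positivity
  have hb : ∀ e ∈ {ε : ℝ | 0 < ε ∧ ∀ A : Set (Fin k → ℝ), MeasurableSet A →
      F A ≤ F' (thick p ε A) + ENNReal.ofReal ε ∧
      F' A ≤ F (thick p ε A) + ENNReal.ofReal ε},
      X ≤ ENNReal.ofReal ((1 + (k : ℝ) ^ (1 - 1 / p) / δ) * e) := by
    rintro e ⟨he, hA⟩
    exact main_bound k p hp δ e hδ he F F' fun A mA => (hA A mA).1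
  have h1 : (1 : ℝ) ∈ {ε : ℝ | 0 < ε ∧ ∀ A : Set (Fin k → ℝ), MeasurableSet A →
      F A ≤ F' (thick p ε A) + ENNReal.ofReal ε ∧
      F' A ≤ F (thick p ε A) + ENNReal.ofReal ε} := by
    refine ⟨one_pos, fun A _ => ⟨?_, ?_⟩⟩ <;> rw [ENNReal.ofReal_one] <;>
      exact prob_le_one.trans le_add_self
  have hXfin : X ≠ ⊤ := ne_top_of_le_ne_top ENNReal.ofReal_ne_top (hb 1 h1)
  rw [ENNReal.le_ofReal_iff_toReal_le hXfin (by positivity), ← div_le_iff₀' hc]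
  refine le_trans (le_csInf ⟨1, h1⟩ ?_) hπ
  intro e he
  rw [div_le_iff₀' hc]
  exact ENNReal.toReal_le_of_le_ofReal (mul_nonneg hc.le he.1.le) (hb e he)
end

section
/- Let d, k, s be positive integers with k ≤ s. Let A be a real d × k matrix, S a real s × d 'sampling' matrix each of whose rows is a standard basis vector of ℝ^d (for every row index i there exists j ∈ {1,…,d} with S_{i,·} = e_jᵀ), and D a real s × s diagonal matrix. Set B = D·S·A and assume BᵀB is invertible. Let z ∈ ℝ^k, ε_mdl, ε_nq ≥ 0, and t, e ∈ ℝ^d with ‖t − Az‖_∞ ≤ ε_mdl and ‖e‖_∞ ≤ ε_nq. Define z̃ = (BᵀB)⁻¹·Bᵀ·D·S·(t + e). Then ‖z̃ − z‖_∞ ≤ √s·(ε_nq + ε_mdl)·σ_min(B)⁻¹·‖D‖_∞, where σ_min(B) = min{‖Bx‖_2 : x ∈ ℝ^k, ‖x‖_2 = 1} is the smallest singular value of B (which is positive since BᵀB is invertible), and ‖D‖_∞ = max_i Σ_j |D_{ij}| is the maximum absolute row sum of D. -/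
open scoped BigOperators
open Matrix

/-- The ℓ_∞ norm on `Fin m → ℝ`. -/
noncomputable def linf {m : ℕ} (x : Fin m → ℝ) : ℝ := ⨆ i, |x i|

/-- The ℓ_2 norm on `Fin m → ℝ`. -/
noncomputable def l2norm {m : ℕ} (x : Fin m → ℝ) : ℝ := Real.sqrt (∑ i, x i ^ 2)

theorem linf_apply_le {m : ℕ} (x : Fin m → ℝ) (i : Fin m) : |x i| ≤ linf x :=
  le_ciSup (f := fun i => |x i|) (Set.finite_range _).bddAbove i

theorem l2norm_nonneg {m : ℕ} (x : Fin m → ℝ) : 0 ≤ l2norm x := Real.sqrt_nonneg _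

theorem l2norm_sq {m : ℕ} (x : Fin m → ℝ) : l2norm x ^ 2 = ∑ i, x i ^ 2 :=
  Real.sq_sqrt (Finset.sum_nonneg fun i _ => sq_nonneg _)

theorem abs_le_l2norm {m : ℕ} (x : Fin m → ℝ) (i : Fin m) : |x i| ≤ l2norm x := by
  apply Real.abs_le_sqrt
  exact Finset.single_le_sum (f := fun i => x i ^ 2) (fun i _ => sq_nonneg _) (Finset.mem_univ i)

theorem l2norm_smul {m : ℕ} (c : ℝ) (x : Fin m → ℝ) : l2norm (c • x) = |c| * l2norm x := by
  unfold l2norm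
  simp only [Pi.smul_apply, smul_eq_mul, mul_pow]
  rw [← Finset.mul_sum, Real.sqrt_mul (sq_nonneg c), Real.sqrt_sq_eq_abs]

theorem l2norm_continuous {m : ℕ} : Continuous (l2norm : (Fin m → ℝ) → ℝ) := by
  unfold l2norm
  fun_prop

theorem eq_zero_of_l2norm {m : ℕ} (x : Fin m → ℝ) (h : l2norm x = 0) : x = 0 := by
  ext i
  have := abs_le_l2norm x i
  rw [h] at this
  simpa using this

theorem l2norm_zero {m : ℕ} : l2norm (0 : Fin m → ℝ) = 0 := by simp [l2norm]

theorem isCompact_l2sphere (k : ℕ) : IsCompact {x : Fin k → ℝ | l2norm x = 1} := by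
  apply Metric.isCompact_of_isClosed_isBounded
  · exact isClosed_eq l2norm_continuous continuous_const
  · refine (Metric.isBounded_closedBall (x := (0 : Fin k → ℝ)) (r := 1)).subset ?_
    intro x hx
    rw [mem_closedBall_zero_iff, pi_norm_le_iff_of_nonneg zero_le_one]
    intro i
    exact (abs_le_l2norm x i).trans (le_of_eq hx)

theorem sigma_pos {k s : ℕ} (hk : 0 < k) (B : Matrix (Fin s) (Fin k) ℝ)
    (hinj : ∀ x, B.mulVec x = 0 → x = 0) :
    0 < sInf {r : ℝ | ∃ x : Fin k → ℝ, l2norm x = 1 ∧ r = l2norm (B.mulVec x)} := by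
  have hne : {x : Fin k → ℝ | l2norm x = 1}.Nonempty :=
    ⟨Pi.single ⟨0, hk⟩ 1, by simp [l2norm, Pi.single_apply, ite_pow]⟩
  have hc : Continuous fun x : Fin k → ℝ => l2norm (B.mulVec x) :=
    l2norm_continuous.comp (Continuous.matrix_mulVec continuous_const continuous_id)
  obtain ⟨x0, hx0, hmin⟩ := (isCompact_l2sphere k).exists_isMinOn hne hc.continuousOn
  have hpos : 0 < l2norm (B.mulVec x0) := by
    rcases (l2norm_nonneg (B.mulVec x0)).lt_or_eq with h | h
    · exact h
    · exfalso
      have h0 := hinj x0 (eq_zero_of_l2norm _ h.symm)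
      have h1 : l2norm x0 = 1 := hx0
      rw [h0, l2norm_zero] at h1
      exact zero_ne_one h1
  refine hpos.trans_le (le_csInf ⟨_, x0, hx0, rfl⟩ ?_)
  rintro r ⟨x, hx, rfl⟩
  exact hmin hx

theorem sigma_mul_le {k s : ℕ} (B : Matrix (Fin s) (Fin k) ℝ) (y : Fin k → ℝ) :
    sInf {r : ℝ | ∃ x : Fin k → ℝ, l2norm x = 1 ∧ r = l2norm (B.mulVec x)} * l2norm y
      ≤ l2norm (B.mulVec y) := by
  rcases (l2norm_nonneg y).lt_or_eq with h | h
  · rw [← le_div_iff₀ h]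
    apply csInf_le
    · refine ⟨0, ?_⟩
      rintro r ⟨x, _, rfl⟩
      exact l2norm_nonneg _
    · refine ⟨(l2norm y)⁻¹ • y, ?_, ?_⟩
      · rw [l2norm_smul, abs_of_pos (inv_pos.2 h), inv_mul_cancel₀ h.ne']
      · rw [Matrix.mulVec_smul, l2norm_smul, abs_of_pos (inv_pos.2 h)]
        field_simp
  · rw [← h, mul_zero]
    exact l2norm_nonneg _

theorem dot_le_l2 {m : ℕ} (x y : Fin m → ℝ) : x ⬝ᵥ y ≤ l2norm x * l2norm y :=
  Real.sum_mul_le_sqrt_mul_sqrt _ _ _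

theorem l2norm_le_of_forall {m : ℕ} (x : Fin m → ℝ) (c : ℝ) (hc : 0 ≤ c)
    (h : ∀ i, |x i| ≤ c) : l2norm x ≤ Real.sqrt m * c := by
  unfold l2norm
  rw [← Real.sqrt_sq hc, ← Real.sqrt_mul (Nat.cast_nonneg m)]
  apply Real.sqrt_le_sqrt
  calc ∑ i, x i ^ 2 ≤ ∑ _i : Fin m, c ^ 2 :=
        Finset.sum_le_sum fun i _ => sq_le_sq' (abs_le.1 (h i)).1 (abs_le.1 (h i)).2
    _ = m * c ^ 2 := by simp

/-- Improved ℓ_∞ recovery bound for the least-squares estimate from sampled, rescaled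
noisy queries (Appendix C of the paper):
`‖z̃ - z‖_∞ ≤ √s (ε_nq + ε_mdl) σ_min(B)⁻¹ ‖D‖_∞` where `B = D S A`. -/
theorem stmt14 (d k s : ℕ) (hd : 0 < d) (hk : 0 < k) (hks : k ≤ s)
    (A : Matrix (Fin d) (Fin k) ℝ)
    (S : Matrix (Fin s) (Fin d) ℝ)
    (hS : ∀ i : Fin s, ∃ j : Fin d, ∀ l : Fin d, S i l = if l = j then 1 else 0)
    (D : Matrix (Fin s) (Fin s) ℝ) (hD : ∀ i j : Fin s, i ≠ j → D i j = 0)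
    (B : Matrix (Fin s) (Fin k) ℝ) (hB : B = D * S * A)
    (hBinv : IsUnit (Bᵀ * B))
    (z : Fin k → ℝ) (εmdl εnq : ℝ) (hεm : 0 ≤ εmdl) (hεn : 0 ≤ εnq)
    (t e : Fin d → ℝ) (ht : linf (t - A.mulVec z) ≤ εmdl) (he : linf e ≤ εnq)
    (ztil : Fin k → ℝ)
    (hz : ztil = (Bᵀ * B)⁻¹.mulVec ((Bᵀ * D * S).mulVec (t + e)))
    (σ : ℝ)
    (hσ : σ = sInf {r : ℝ | ∃ x : Fin k → ℝ, l2norm x = 1 ∧ r = l2norm (B.mulVec x)})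
    (Dnorm : ℝ) (hDnorm : Dnorm = ⨆ i : Fin s, ∑ j, |D i j|) :
    linf (ztil - z) ≤ Real.sqrt s * (εnq + εmdl) * σ⁻¹ * Dnorm := by
  have hdet : IsUnit (Bᵀ * B).det := (Matrix.isUnit_iff_isUnit_det _).1 hBinv
  have hinj : ∀ x, B.mulVec x = 0 → x = 0 := by
    intro x hx
    have h : (Bᵀ * B)⁻¹.mulVec ((Bᵀ * B).mulVec x) = x := by
      rw [Matrix.mulVec_mulVec, Matrix.nonsing_inv_mul _ hdet, Matrix.one_mulVec]
    rw [← h, ← Matrix.mulVec_mulVec x Bᵀ B, hx, Matrix.mulVec_zero, Matrix.mulVec_zero]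
  have hσpos : 0 < σ := hσ ▸ sigma_pos hk B hinj
  have hσle : σ * l2norm (ztil - z) ≤ l2norm (B.mulVec (ztil - z)) := hσ ▸ sigma_mul_le B _
  set v : Fin d → ℝ := t - A.mulVec z + e with hv
  set w : Fin s → ℝ := D.mulVec (S.mulVec v) with hw
  have hnormal : (Bᵀ * B).mulVec (ztil - z) = Bᵀ.mulVec w := by
    have h1 : (Bᵀ * B).mulVec ztil = (Bᵀ * D * S).mulVec (t + e) := by
      rw [hz, Matrix.mulVec_mulVec, Matrix.mul_nonsing_inv _ hdet, Matrix.one_mulVec]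
    have h2 : (Bᵀ * B).mulVec z = (Bᵀ * D * S).mulVec (A.mulVec z) := by
      rw [Matrix.mulVec_mulVec]
      congr 1
      conv_lhs => rw [show Bᵀ * B = Bᵀ * (D * S * A) by rw [← hB]]
      simp only [Matrix.mul_assoc]
    rw [Matrix.mulVec_sub, h1, h2, ← Matrix.mulVec_sub, hw, Matrix.mulVec_mulVec,
      Matrix.mulVec_mulVec, hv, Matrix.mul_assoc]
    congr 1
    abel
  have hsq : l2norm (B.mulVec (ztil - z)) ^ 2 = B.mulVec (ztil - z) ⬝ᵥ w := by
    have h1 : l2norm (B.mulVec (ztil - z)) ^ 2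
        = B.mulVec (ztil - z) ⬝ᵥ B.mulVec (ztil - z) := by
      rw [l2norm_sq]
      simp [dotProduct, sq]
    have h3 : ∀ u : Fin s → ℝ, B.mulVec (ztil - z) ⬝ᵥ u = (ztil - z) ⬝ᵥ Bᵀ.mulVec u := by
      intro u
      rw [Matrix.mulVec_transpose, dotProduct_comm, Matrix.dotProduct_mulVec, dotProduct_comm]
    rw [h1, h3, h3, Matrix.mulVec_mulVec, hnormal]
  have hBw : l2norm (B.mulVec (ztil - z)) ≤ l2norm w := by
    have h1 := dot_le_l2 (B.mulVec (ztil - z)) w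
    rw [← hsq, sq] at h1
    rcases (l2norm_nonneg (B.mulVec (ztil - z))).lt_or_eq with h | h
    · exact le_of_mul_le_mul_left h1 h
    · rw [← h]
      exact l2norm_nonneg _
  have hvle : ∀ j, |v j| ≤ εnq + εmdl := by
    intro j
    have h1 := (linf_apply_le _ j).trans ht
    have h2 := (linf_apply_le _ j).trans he
    have h3 := abs_add_le ((t - A.mulVec z) j) (e j)
    rw [hv, Pi.add_apply]
    linarith
  have hSle : ∀ i, |S.mulVec v i| ≤ εnq + εmdl := by
    intro i
    obtain ⟨j, hj⟩ := hS i
    have : S.mulVec v i = v j := by simp [Matrix.mulVec, dotProduct, hj]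
    rw [this]
    exact hvle j
  have hε : 0 ≤ εnq + εmdl := add_nonneg hεn hεm
  have hDle : ∀ i, ∑ j, |D i j| ≤ Dnorm := by
    intro i
    rw [hDnorm]
    exact le_ciSup (f := fun i => ∑ j, |D i j|) (Set.finite_range _).bddAbove i
  have hD0 : 0 ≤ Dnorm :=
    (Finset.sum_nonneg fun j _ => abs_nonneg _).trans (hDle ⟨0, hk.trans_le hks⟩)
  have hwle : ∀ i, |w i| ≤ (εnq + εmdl) * Dnorm := by
    intro i
    calc |w i| = |∑ j, D i j * S.mulVec v j| := rfl
      _ ≤ ∑ j, |D i j * S.mulVec v j| := Finset.abs_sum_le_sum_abs _ _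
      _ ≤ ∑ j, |D i j| * (εnq + εmdl) := by
          refine Finset.sum_le_sum fun j _ => ?_
          rw [abs_mul]
          exact mul_le_mul_of_nonneg_left (hSle j) (abs_nonneg _)
      _ = (εnq + εmdl) * ∑ j, |D i j| := by rw [← Finset.sum_mul, mul_comm]
      _ ≤ _ := mul_le_mul_of_nonneg_left (hDle i) hε
  have hw2 := l2norm_le_of_forall w _ (mul_nonneg hε hD0) hwle
  have hfin : l2norm (ztil - z) ≤ Real.sqrt s * (εnq + εmdl) * σ⁻¹ * Dnorm := by
    have h1 : l2norm (ztil - z) ≤ (Real.sqrt s * ((εnq + εmdl) * Dnorm)) / σ := by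
      rw [le_div_iff₀ hσpos, mul_comm]
      exact hσle.trans (hBw.trans hw2)
    refine h1.trans (le_of_eq ?_)
    rw [div_eq_mul_inv]
    ring
  haveI : Nonempty (Fin k) := ⟨⟨0, hk⟩⟩
  exact ciSup_le fun i => (abs_le_l2norm _ i).trans hfin
end
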